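/- arXiv:1705.03990 — 3 statements merged into one kernel-verified Lean document; each statement's English description precedes it below -/
import Mathlib

section
/- Define ψ : (0,∞) → ℝ by ψ(θ) := G(1/θ) − θ, where G(ζ) := K₃(ζ)/K₂(ζ) and K_ν(ζ) := ∫₀^∞ cosh(νt)·exp(−ζ·cosh t) dt. Then ψ is strictly increasing on (0,∞), ψ(θ) → 1 as θ → 0⁺, and ψ(θ) → +∞ as θ → +∞. Consequently, for every real e > 1 the equation G(1/θ) − θ = e has exactly one solution θ ∈ (0,∞). -/
/-- Modified Bessel function of the second kind,
`K_ν(ζ) = ∫₀^∞ cosh(νt)·exp(−ζ·cosh t) dt`. -/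
noncomputable def besselK (ν ζ : ℝ) : ℝ :=
  ∫ t in Set.Ioi (0 : ℝ), Real.cosh (ν * t) * Real.exp (-ζ * Real.cosh t)

/-- `ψ(θ) = G(1/θ) − θ` where `G(ζ) = K₃(ζ)/K₂(ζ)`. -/
noncomputable def psiFn (θ : ℝ) : ℝ := besselK 3 (1 / θ) / besselK 2 (1 / θ) - θ

/-!
Under the probability density proportional to `cosh (νt) exp (-ζ cosh t)` on `(0, ∞)`, the mean of
`cosh` is `(K_{ν+1}(ζ) + K_{ν-1}(ζ)) / (2 K_ν(ζ))`. Combined with the recurrence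
`K_{ν+1}(ζ) = K_{ν-1}(ζ) + (2ν/ζ) K_ν(ζ)`, this shows that `K_{ν+1}(1/θ) / K_ν(1/θ) - cθ` is that
mean at `ζ = 1/θ` plus `(ν - c)θ`. The mean is monotone in `θ`, because its derivative in `-ζ` is a
variance, so the sum is strictly increasing as soon as `c < ν`. The mean is at least `1` because
`1 ≤ cosh`, and it equals `K_{ν-1} / K_ν + νθ ≤ 1 + νθ` when `ν ≥ 1/2`; both limits follow.
-/

open MeasureTheory ProbabilityTheory Real Set Filter Topology

section CumulantGeneratingFunction

variable {Ω : Type*} {mΩ : MeasurableSpace Ω} {X : Ω → ℝ} {μ : Measure Ω}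

lemma iteratedDeriv_two_cgf_nonneg {v : ℝ} (hv : v ∈ interior (integrableExpSet X μ)) :
    0 ≤ iteratedDeriv 2 (cgf X μ) v := by
  rw [iteratedDeriv_two_cgf_eq_integral hv]
  exact div_nonneg (integral_nonneg fun ω ↦ by positivity) mgf_nonneg

lemma monotoneOn_deriv_cgf :
    MonotoneOn (deriv (cgf X μ)) (interior (integrableExpSet X μ)) := by
  refine monotoneOn_of_deriv_nonneg convex_integrableExpSet.interior
    analyticOnNhd_cgf.deriv.continuousOn
    (analyticOnNhd_cgf.deriv.differentiableOn.mono interior_subset) fun v hv ↦ ?_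
  have deriv_deriv_eq : deriv (deriv (cgf X μ)) = iteratedDeriv 2 (cgf X μ) := by
    rw [iteratedDeriv_succ, iteratedDeriv_one]
  rw [deriv_deriv_eq]
  exact iteratedDeriv_two_cgf_nonneg (interior_subset hv)

end CumulantGeneratingFunction

section HyperbolicBounds

lemma cosh_le_exp_abs (x : ℝ) : cosh x ≤ exp |x| := by
  rw [← cosh_abs, ← cosh_add_sinh]
  exact le_add_of_nonneg_right (sinh_nonneg_iff.2 (abs_nonneg x))

lemma abs_sinh_le_cosh (x : ℝ) : |sinh x| ≤ cosh x := by
  rw [abs_sinh, ← cosh_abs]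
  exact (sinh_lt_cosh |x|).le

lemma sq_div_four_le_cosh (x : ℝ) : x ^ 2 / 4 ≤ cosh x := by
  rw [← cosh_abs, ← sq_abs, cosh_eq]
  linarith [quadratic_le_exp_of_nonneg (abs_nonneg x), exp_pos (-|x|), abs_nonneg x]

lemma cosh_mul_mul_exp_neg_mul_cosh_le (ν : ℝ) {ζ t : ℝ} (hζ : 0 < ζ) (ht : 0 ≤ t) :
    cosh (ν * t) * exp (-ζ * cosh t) ≤ exp ((|ν| + 1) ^ 2 / ζ) * exp (-t) := by
  have exponent_le : |ν * t| + -ζ * cosh t ≤ (|ν| + 1) ^ 2 / ζ + -t := by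
    have cosh_lower : ζ * (t ^ 2 / 4) ≤ ζ * cosh t := by gcongr; exact sq_div_four_le_cosh t
    have square_nonneg : 0 ≤ (|ν| + 1 - ζ * t / 2) ^ 2 / ζ := by positivity
    have square_eq : (|ν| + 1 - ζ * t / 2) ^ 2 / ζ
        = (|ν| + 1) ^ 2 / ζ - (|ν| + 1) * t + ζ * (t ^ 2 / 4) := by
      field_simp
      ring
    rw [abs_mul, abs_of_nonneg ht]
    linarith
  calc cosh (ν * t) * exp (-ζ * cosh t)
      ≤ exp |ν * t| * exp (-ζ * cosh t) := by gcongr; exact cosh_le_exp_abs _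
    _ = exp (|ν * t| + -ζ * cosh t) := (exp_add _ _).symm
    _ ≤ exp ((|ν| + 1) ^ 2 / ζ + -t) := exp_le_exp.2 exponent_le
    _ = exp ((|ν| + 1) ^ 2 / ζ) * exp (-t) := exp_add _ _

end HyperbolicBounds

section BesselK

variable {ζ : ℝ}

lemma integrableOn_besselK (ν : ℝ) (hζ : 0 < ζ) :
    IntegrableOn (fun t ↦ cosh (ν * t) * exp (-ζ * cosh t)) (Ioi 0) := by
  refine integrable_of_isBigO_exp_neg one_pos (by fun_prop) <|
    Asymptotics.IsBigO.of_bound (exp ((|ν| + 1) ^ 2 / ζ)) ?_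
  filter_upwards [eventually_ge_atTop 0] with t ht
  rw [norm_of_nonneg (by positivity), norm_of_nonneg (by positivity), neg_one_mul]
  exact cosh_mul_mul_exp_neg_mul_cosh_le ν hζ ht

lemma tendsto_sinh_mul_mul_exp_neg_mul_cosh_atTop (ν : ℝ) (hζ : 0 < ζ) :
    Tendsto (fun t ↦ sinh (ν * t) * exp (-ζ * cosh t)) atTop (𝓝 0) := by
  have bound_tendsto : Tendsto (fun t ↦ exp ((|ν| + 1) ^ 2 / ζ) * exp (-t)) atTop (𝓝 0) := by
    simpa only [mul_zero] using tendsto_exp_neg_atTop_nhds_zero.const_mul _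
  refine squeeze_zero_norm' ?_ bound_tendsto
  filter_upwards [eventually_ge_atTop 0] with t ht
  calc ‖sinh (ν * t) * exp (-ζ * cosh t)‖
      = |sinh (ν * t)| * exp (-ζ * cosh t) := by rw [norm_mul, norm_eq_abs, norm_eq_abs, abs_exp]
    _ ≤ cosh (ν * t) * exp (-ζ * cosh t) := by gcongr; exact abs_sinh_le_cosh _
    _ ≤ exp ((|ν| + 1) ^ 2 / ζ) * exp (-t) := cosh_mul_mul_exp_neg_mul_cosh_le ν hζ ht

lemma besselK_pos (ν : ℝ) (hζ : 0 < ζ) : 0 < besselK ν ζ := by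
  have integrand_pos (t : ℝ) : 0 < cosh (ν * t) * exp (-ζ * cosh t) := by positivity
  rw [besselK, integral_pos_iff_support_of_nonneg (fun t ↦ (integrand_pos t).le)
    (integrableOn_besselK ν hζ), Function.support_eq_univ fun t ↦ (integrand_pos t).ne']
  simp only [Measure.restrict_apply_univ, volume_Ioi, ENNReal.zero_lt_top]

lemma besselK_le_besselK_of_abs_le {ν ν' : ℝ} (h : |ν| ≤ |ν'|) (hζ : 0 < ζ) :
    besselK ν ζ ≤ besselK ν' ζ := by
  refine integral_mono (integrableOn_besselK ν hζ) (integrableOn_besselK ν' hζ) fun t ↦ ?_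
  have cosh_mul_le : cosh (ν * t) ≤ cosh (ν' * t) := by
    rw [cosh_le_cosh, abs_mul, abs_mul]
    gcongr
  beta_reduce
  gcongr

lemma besselK_add_one_add_besselK_sub_one (ν : ℝ) (hζ : 0 < ζ) :
    besselK (ν + 1) ζ + besselK (ν - 1) ζ
      = 2 * ∫ t in Ioi 0, cosh (ν * t) * (cosh t * exp (-ζ * cosh t)) := by
  rw [besselK, besselK, ← integral_add (integrableOn_besselK _ hζ) (integrableOn_besselK _ hζ),
    ← integral_const_mul]
  congr 1 with t
  rw [add_one_mul, sub_one_mul, cosh_add, cosh_sub]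
  ring

lemma integrableOn_cosh_mul_mul_cosh_mul_exp (ν : ℝ) (hζ : 0 < ζ) :
    IntegrableOn (fun t ↦ cosh (ν * t) * (cosh t * exp (-ζ * cosh t))) (Ioi 0) := by
  refine IntegrableOn.congr_fun (((integrableOn_besselK (ν + 1) hζ).add
    (integrableOn_besselK (ν - 1) hζ)).div_const 2) (fun t _ ↦ ?_) measurableSet_Ioi
  simp only [Pi.add_apply, add_one_mul, sub_one_mul, cosh_add, cosh_sub]
  ring

lemma two_mul_besselK_le (ν : ℝ) (hζ : 0 < ζ) :
    2 * besselK ν ζ ≤ besselK (ν + 1) ζ + besselK (ν - 1) ζ := by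
  rw [besselK_add_one_add_besselK_sub_one ν hζ, besselK]
  gcongr ?_ * ?_
  refine integral_mono (integrableOn_besselK ν hζ)
    (integrableOn_cosh_mul_mul_cosh_mul_exp ν hζ) fun t ↦ ?_
  beta_reduce
  gcongr
  exact le_mul_of_one_le_left (exp_pos _).le (one_le_cosh t)

lemma hasDerivAt_sinh_mul_mul_exp_neg_mul_cosh (ν ζ t : ℝ) :
    HasDerivAt (fun t ↦ sinh (ν * t) * exp (-ζ * cosh t))
      (ν * (cosh (ν * t) * exp (-ζ * cosh t))
        - ζ / 2 * (cosh ((ν + 1) * t) * exp (-ζ * cosh t)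
          - cosh ((ν - 1) * t) * exp (-ζ * cosh t))) t := by
  refine ((hasDerivAt_id t).const_mul ν).sinh.mul
    ((hasDerivAt_cosh t).const_mul (-ζ)).exp |>.congr_deriv ?_
  simp only [id_eq, add_one_mul, sub_one_mul, cosh_add, cosh_sub]
  ring

lemma besselK_add_one (ν : ℝ) (hζ : 0 < ζ) :
    besselK (ν + 1) ζ = besselK (ν - 1) ζ + 2 * ν / ζ * besselK ν ζ := by
  have int (ν : ℝ) := integrableOn_besselK ν hζ
  have int_mul := (int ν).const_mul ν
  have int_sub : IntegrableOn (fun t ↦ ζ / 2 * (cosh ((ν + 1) * t) * exp (-ζ * cosh t)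
      - cosh ((ν - 1) * t) * exp (-ζ * cosh t))) (Ioi 0) :=
    ((int (ν + 1)).sub (int (ν - 1))).const_mul (ζ / 2)
  have integral_deriv_eq_zero : ν * besselK ν ζ
      - ζ / 2 * (besselK (ν + 1) ζ - besselK (ν - 1) ζ) = 0 := by
    have integral_deriv := integral_Ioi_of_hasDerivAt_of_tendsto'
      (fun t _ ↦ hasDerivAt_sinh_mul_mul_exp_neg_mul_cosh ν ζ t) (int_mul.sub int_sub)
      (tendsto_sinh_mul_mul_exp_neg_mul_cosh_atTop ν hζ)
    rwa [integral_sub int_mul int_sub, integral_const_mul, integral_const_mul,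
      integral_sub (int (ν + 1)) (int (ν - 1)), mul_zero, sinh_zero, zero_mul, sub_zero]
      at integral_deriv
  field_simp
  linarith

end BesselK

section BesselMeasure

variable {ν ζ : ℝ}

/-- The measure `cosh (νt) dt` on `(0, ∞)`; its Laplace transform along `t ↦ cosh t` is `K_ν`, so
that Mathlib's theory of moment generating functions applies to `K_ν`. -/
noncomputable def besselMeasure (ν : ℝ) : Measure ℝ :=
  (volume.restrict (Ioi 0)).withDensity fun t ↦ ENNReal.ofReal (cosh (ν * t))

lemma integral_besselMeasure (ν : ℝ) (f : ℝ → ℝ) :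
    ∫ t, f t ∂besselMeasure ν = ∫ t in Ioi 0, cosh (ν * t) * f t := by
  rw [besselMeasure, integral_withDensity_eq_integral_toReal_smul (by fun_prop) (by simp)]
  simp only [ENNReal.toReal_ofReal (cosh_pos _).le, smul_eq_mul]

lemma integrable_besselMeasure_iff {f : ℝ → ℝ} :
    Integrable f (besselMeasure ν) ↔ IntegrableOn (fun t ↦ cosh (ν * t) * f t) (Ioi 0) := by
  rw [besselMeasure, integrable_withDensity_iff_integrable_smul' (by fun_prop) (by simp)]
  simp only [ENNReal.toReal_ofReal (cosh_pos _).le, smul_eq_mul, IntegrableOn]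

lemma mgf_cosh_besselMeasure (ν ζ : ℝ) : mgf cosh (besselMeasure ν) (-ζ) = besselK ν ζ := by
  rw [mgf, integral_besselMeasure, besselK]

lemma neg_mem_interior_integrableExpSet_cosh (hζ : 0 < ζ) :
    -ζ ∈ interior (integrableExpSet cosh (besselMeasure ν)) := by
  have Iio_subset : Iio 0 ⊆ integrableExpSet cosh (besselMeasure ν) := fun v hv ↦ by
    rw [integrableExpSet, mem_ofPred_eq, integrable_besselMeasure_iff]
    simpa only [neg_neg] using integrableOn_besselK ν (neg_pos.2 hv)
  exact interior_maximal Iio_subset isOpen_Iio (neg_lt_zero.2 hζ)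

/-- The mean of `cosh` under the probability density proportional to `cosh (νt) exp (-ζ cosh t)` on
`(0, ∞)`, encoded as the logarithmic derivative of `v ↦ K_ν(-v)` at `v = -ζ`. -/
noncomputable def tiltedCoshMean (ν ζ : ℝ) : ℝ :=
  deriv (cgf cosh (besselMeasure ν)) (-ζ)

lemma tiltedCoshMean_eq (hζ : 0 < ζ) :
    tiltedCoshMean ν ζ = (besselK (ν + 1) ζ + besselK (ν - 1) ζ) / (2 * besselK ν ζ) := by
  rw [tiltedCoshMean, deriv_cgf (neg_mem_interior_integrableExpSet_cosh hζ),
    integral_besselMeasure, mgf_cosh_besselMeasure, besselK_add_one_add_besselK_sub_one ν hζ,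
    mul_div_mul_left _ _ two_ne_zero]

lemma antitoneOn_tiltedCoshMean : AntitoneOn (tiltedCoshMean ν) (Ioi 0) :=
  fun _ hx _ hy hxy ↦ monotoneOn_deriv_cgf (neg_mem_interior_integrableExpSet_cosh hy)
    (neg_mem_interior_integrableExpSet_cosh hx) (neg_le_neg hxy)

lemma continuousOn_tiltedCoshMean : ContinuousOn (tiltedCoshMean ν) (Ioi 0) :=
  analyticOnNhd_cgf.deriv.continuousOn.comp continuousOn_neg
    fun _ hx ↦ neg_mem_interior_integrableExpSet_cosh hx

lemma one_le_tiltedCoshMean (hζ : 0 < ζ) : 1 ≤ tiltedCoshMean ν ζ := by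
  rw [tiltedCoshMean_eq hζ, one_le_div₀ (mul_pos two_pos (besselK_pos ν hζ))]
  exact two_mul_besselK_le ν hζ

lemma tiltedCoshMean_eq_sub_one (hζ : 0 < ζ) :
    tiltedCoshMean ν ζ = besselK (ν - 1) ζ / besselK ν ζ + ν / ζ := by
  have := besselK_pos ν hζ
  rw [tiltedCoshMean_eq hζ, besselK_add_one ν hζ]
  field_simp
  ring

lemma besselK_add_one_div_besselK (hζ : 0 < ζ) :
    besselK (ν + 1) ζ / besselK ν ζ = tiltedCoshMean ν ζ + ν / ζ := by
  have := besselK_pos ν hζ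
  rw [tiltedCoshMean_eq_sub_one hζ, besselK_add_one ν hζ]
  field_simp
  ring

lemma tiltedCoshMean_le (hν : 1 / 2 ≤ ν) (hζ : 0 < ζ) : tiltedCoshMean ν ζ ≤ 1 + ν / ζ := by
  have abs_sub_one_le : |ν - 1| ≤ |ν| := by
    rw [abs_of_nonneg (by linarith : 0 ≤ ν), abs_le]
    constructor <;> linarith
  rw [tiltedCoshMean_eq_sub_one hζ]
  gcongr
  exact div_le_one_of_le₀ (besselK_le_besselK_of_abs_le abs_sub_one_le hζ) (besselK_pos ν hζ).le

end BesselMeasure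

section ShiftedBesselRatio

variable {ν c θ : ℝ}

/-- `θ ↦ K_{ν+1}(1/θ) / K_ν(1/θ) - cθ`; the case `ν = 2`, `c = 1` is `psiFn`. -/
noncomputable def shiftedBesselRatio (ν c θ : ℝ) : ℝ :=
  besselK (ν + 1) (1 / θ) / besselK ν (1 / θ) - c * θ

lemma psiFn_eq_shiftedBesselRatio : psiFn = shiftedBesselRatio 2 1 := by
  ext θ
  norm_num [psiFn, shiftedBesselRatio]

lemma shiftedBesselRatio_eq (hθ : 0 < θ) :
    shiftedBesselRatio ν c θ = tiltedCoshMean ν (1 / θ) + (ν - c) * θ := by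
  rw [shiftedBesselRatio, besselK_add_one_div_besselK (one_div_pos.2 hθ), div_div_eq_mul_div]
  ring

lemma strictMonoOn_shiftedBesselRatio (hc : c < ν) :
    StrictMonoOn (shiftedBesselRatio ν c) (Ioi 0) := by
  intro x hx y hy hxy
  have mean_le : tiltedCoshMean ν (1 / x) ≤ tiltedCoshMean ν (1 / y) :=
    antitoneOn_tiltedCoshMean (mem_Ioi.2 (one_div_pos.2 hy)) (mem_Ioi.2 (one_div_pos.2 hx))
      (one_div_le_one_div_of_le hx hxy.le)
  rw [shiftedBesselRatio_eq hx, shiftedBesselRatio_eq hy]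
  exact add_lt_add_of_le_of_lt mean_le (mul_lt_mul_of_pos_left hxy (sub_pos.2 hc))

lemma continuousOn_shiftedBesselRatio : ContinuousOn (shiftedBesselRatio ν c) (Ioi 0) := by
  have mean_continuousOn : ContinuousOn (fun θ ↦ tiltedCoshMean ν (1 / θ)) (Ioi 0) :=
    continuousOn_tiltedCoshMean.comp (continuousOn_const.div continuousOn_id fun _ hθ ↦ ne_of_gt hθ)
      fun _ hθ ↦ mem_Ioi.2 (one_div_pos.2 hθ)
  exact (mean_continuousOn.add (by fun_prop)).congr fun _ hθ ↦ shiftedBesselRatio_eq hθ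

lemma le_shiftedBesselRatio (hθ : 0 < θ) : 1 + (ν - c) * θ ≤ shiftedBesselRatio ν c θ := by
  rw [shiftedBesselRatio_eq hθ]
  gcongr
  exact one_le_tiltedCoshMean (one_div_pos.2 hθ)

lemma shiftedBesselRatio_le (hν : 1 / 2 ≤ ν) (hθ : 0 < θ) :
    shiftedBesselRatio ν c θ ≤ 1 + (2 * ν - c) * θ := by
  have mean_le := tiltedCoshMean_le hν (one_div_pos.2 hθ)
  rw [div_div_eq_mul_div, div_one] at mean_le
  rw [shiftedBesselRatio_eq hθ]
  linarith

lemma tendsto_shiftedBesselRatio_nhdsGT_zero (hν : 1 / 2 ≤ ν) :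
    Tendsto (shiftedBesselRatio ν c) (𝓝[>] 0) (𝓝 1) := by
  have affine_tendsto (a : ℝ) : Tendsto (fun θ ↦ 1 + a * θ) (𝓝[>] 0) (𝓝 1) :=
    tendsto_nhdsWithin_of_tendsto_nhds (Continuous.tendsto' (by fun_prop) _ _ (by simp))
  refine tendsto_of_tendsto_of_tendsto_of_le_of_le' (affine_tendsto (ν - c))
    (affine_tendsto (2 * ν - c)) ?_ ?_
  · filter_upwards [self_mem_nhdsWithin] with θ hθ using le_shiftedBesselRatio hθ
  · filter_upwards [self_mem_nhdsWithin] with θ hθ using shiftedBesselRatio_le hν hθ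

lemma tendsto_shiftedBesselRatio_atTop (hc : c < ν) :
    Tendsto (shiftedBesselRatio ν c) atTop atTop := by
  refine tendsto_atTop_mono' _ ?_ (tendsto_atTop_add_const_left _ 1
    (tendsto_id.const_mul_atTop (sub_pos.2 hc)))
  filter_upwards [eventually_gt_atTop 0] with θ hθ using le_shiftedBesselRatio hθ

lemma existsUnique_shiftedBesselRatio_eq (hν : 1 / 2 ≤ ν) (hc : c < ν) {e : ℝ} (he : 1 < e) :
    ∃! θ, 0 < θ ∧ shiftedBesselRatio ν c θ = e := by
  obtain ⟨θ, hθ, rfl⟩ := isPreconnected_Ioi.intermediate_value_Ioi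
    (le_principal_iff.2 self_mem_nhdsWithin) (le_principal_iff.2 (Ioi_mem_atTop 0))
    continuousOn_shiftedBesselRatio (tendsto_shiftedBesselRatio_nhdsGT_zero hν)
    (tendsto_shiftedBesselRatio_atTop hc) he
  exact ⟨θ, ⟨hθ, rfl⟩, fun _ h ↦ (strictMonoOn_shiftedBesselRatio hc).injOn h.1 hθ h.2⟩

end ShiftedBesselRatio

theorem stmt5_general {ν c : ℝ} (hν : 1 / 2 ≤ ν) (hc : c < ν) :
    StrictMonoOn (shiftedBesselRatio ν c) (Ioi 0) ∧
    Tendsto (shiftedBesselRatio ν c) (𝓝[>] 0) (𝓝 1) ∧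
    Tendsto (shiftedBesselRatio ν c) atTop atTop ∧
    ∀ e : ℝ, 1 < e → ∃! θ : ℝ, 0 < θ ∧ shiftedBesselRatio ν c θ = e :=
  ⟨strictMonoOn_shiftedBesselRatio hc, tendsto_shiftedBesselRatio_nhdsGT_zero hν,
    tendsto_shiftedBesselRatio_atTop hc, fun _ he ↦ existsUnique_shiftedBesselRatio_eq hν hc he⟩

theorem stmt5 :
    StrictMonoOn psiFn (Set.Ioi (0 : ℝ)) ∧
    Filter.Tendsto psiFn (nhdsWithin 0 (Set.Ioi (0 : ℝ))) (nhds 1) ∧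
    Filter.Tendsto psiFn Filter.atTop Filter.atTop ∧
    ∀ e : ℝ, 1 < e → ∃! θ : ℝ, 0 < θ ∧ psiFn θ = e := by
  rw [psiFn_eq_shiftedBesselRatio]
  exact stmt5_general (by norm_num) (by norm_num)
end

section
/- Fix ℓ ≥ 1 and ζ > 0, and let (P_k^{(ℓ)}) and (P_k^{(ℓ−1)}) be orthonormal families for ω^{(ℓ)}(·;ζ) and ω^{(ℓ−1)}(·;ζ), with positive leading coefficients c_k^{(ℓ)}, c_k^{(ℓ−1)}. Define p_k := c_k^{(ℓ−1)}/c_k^{(ℓ)}, r_k := ((2ℓ−1)/(2ℓ+1))·c_{k−1}^{(ℓ)}/c_{k+1}^{(ℓ−1)} (k ≥ 1), q_k := ∫₁^∞ P_{k+1}^{(ℓ−1)}(x)·P_k^{(ℓ)}(x)·ω^{(ℓ)}(x;ζ) dx, p̃_k := ((2ℓ−1)/(2ℓ+1))·c_k^{(ℓ)}/c_{k+1}^{(ℓ−1)}, q̃_k := σ(P_{k+1}^{(ℓ−1)}) − σ(P_k^{(ℓ)}) (where σ(P) denotes the sum of the roots of P, i.e. minus the ratio of the subleading to the leading coefficient,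 with σ of a constant polynomial defined to be 0), and r̃_k := p_k·(1 − ((2ℓ+1)/(2ℓ−1))·p̃_k²). Then all of p_k, q_k, r_k, p̃_k, q̃_k, r̃_k are strictly positive (for all indices where they are defined). -/
open MeasureTheory Polynomial

/-- `K₂(ζ) = ∫₀^∞ cosh(2t)·exp(−ζ·cosh t) dt`. -/
noncomputable def K2 (ζ : ℝ) : ℝ :=
  ∫ t in Set.Ioi (0 : ℝ), Real.cosh (2 * t) * Real.exp (-ζ * Real.cosh t)

/-- The weight `ω^{(ℓ)}(x;ζ) = ζ·(x²−1)^{ℓ+1/2}·exp(−ζx)/((2ℓ+1)·K₂(ζ))` on `[1,∞)`. -/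
noncomputable def wgt (l : ℕ) (ζ : ℝ) (x : ℝ) : ℝ :=
  ζ * (x ^ 2 - 1) ^ ((l : ℝ) + 1 / 2) * Real.exp (-ζ * x) / ((2 * (l : ℝ) + 1) * K2 ζ)

/-- An orthonormal family for the weight `ω^{(ℓ)}(·;ζ)`: real polynomials `P k` of degree
exactly `k`, positive leading coefficients, orthonormal for the weighted inner product. -/
def IsOrthoFam (l : ℕ) (ζ : ℝ) (P : ℕ → Polynomial ℝ) : Prop :=
  (∀ k : ℕ, (P k).degree = k) ∧ (∀ k : ℕ, 0 < (P k).leadingCoeff) ∧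
  ∀ i k : ℕ, (∫ x in Set.Ioi (1 : ℝ), (P i).eval x * (P k).eval x * wgt l ζ x)
      = if i = k then 1 else 0

/-- `p_k = c_k^{(ℓ−1)} / c_k^{(ℓ)}` (ratio of leading coefficients); `Q` is the family
for `ℓ−1` and `P` the family for `ℓ`. -/
noncomputable def pC (P Q : ℕ → Polynomial ℝ) (k : ℕ) : ℝ :=
  (Q k).leadingCoeff / (P k).leadingCoeff

/-- `r_k = ((2ℓ−1)/(2ℓ+1))·c_{k−1}^{(ℓ)}/c_{k+1}^{(ℓ−1)}` for `k ≥ 1`, with `r₀ = 0`. -/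
noncomputable def rC (l : ℕ) (P Q : ℕ → Polynomial ℝ) (k : ℕ) : ℝ :=
  if k = 0 then 0
  else ((2 * (l : ℝ) - 1) / (2 * (l : ℝ) + 1)) * (P (k - 1)).leadingCoeff
        / (Q (k + 1)).leadingCoeff

/-- `q_k = ∫ P_{k+1}^{(ℓ−1)}·P_k^{(ℓ)}·ω^{(ℓ)} dx`. -/
noncomputable def qC (l : ℕ) (ζ : ℝ) (P Q : ℕ → Polynomial ℝ) (k : ℕ) : ℝ :=
  ∫ x in Set.Ioi (1 : ℝ), (Q (k + 1)).eval x * (P k).eval x * wgt l ζ x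

/-- `p̃_k = ((2ℓ−1)/(2ℓ+1))·c_k^{(ℓ)}/c_{k+1}^{(ℓ−1)}`. -/
noncomputable def ptC (l : ℕ) (P Q : ℕ → Polynomial ℝ) (k : ℕ) : ℝ :=
  ((2 * (l : ℝ) - 1) / (2 * (l : ℝ) + 1)) * (P k).leadingCoeff / (Q (k + 1)).leadingCoeff

/-- `σ(P)`: the sum of the roots of `P`, i.e. minus the ratio of the subleading to the
leading coefficient; `σ` of a constant polynomial is `0`. -/
noncomputable def rootSum (P : Polynomial ℝ) : ℝ :=
  if P.natDegree = 0 then 0 else -(P.coeff (P.natDegree - 1)) / P.leadingCoeff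

/-- `q̃_k = σ(P_{k+1}^{(ℓ−1)}) − σ(P_k^{(ℓ)})`. -/
noncomputable def qtC (P Q : ℕ → Polynomial ℝ) (k : ℕ) : ℝ :=
  rootSum (Q (k + 1)) - rootSum (P k)

/-- `r̃_k = p_k·(1 − ((2ℓ+1)/(2ℓ−1))·p̃_k²)`. -/
noncomputable def rtC (l : ℕ) (P Q : ℕ → Polynomial ℝ) (k : ℕ) : ℝ :=
  pC P Q k * (1 - ((2 * (l : ℝ) + 1) / (2 * (l : ℝ) - 1)) * (ptC l P Q k) ^ 2)

/-!
Up to the constant `a = (2ℓ - 1) / (2ℓ + 1)`, the weight for `ℓ` is the weight for `ℓ - 1` times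
`x² - 1`, so `P` is orthonormal for a quadratic Christoffel transform `p ↦ M (w * p)`,
`w = a (x - 1) (x + 1)`, of the functional `M` for which `Q` is orthonormal. Expanding `w * P k` in
the basis `Q` gives a three-term and a two-term recurrence with the coefficients `p`, `q`, `r`,
`p̃`, `q̃`, `r̃`. Ratios of leading coefficients are positive by definition and `0 < r̃` is a Bessel
inequality; then `q` and `q̃` are forced to be positive by evaluating the recurrences at the root
`-1` of `w`, to the left of the support of the weight, where consecutive members of `Q` have
opposite signs.
-/

section Orthonormal

variable {K : Type*} [Field K]

/-- Orthonormality of a sequence of polynomials for the bilinear form `(p, q) ↦ M (p * q)` attached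
to a moment functional `M`. -/
def IsOrthonormalFor (Q : Polynomial.Sequence K) (M : K[X] →ₗ[K] K) : Prop :=
  ∀ i k, M (Q i * Q k) = if i = k then 1 else 0

/-- The Christoffel transform of a moment functional by a polynomial `w`: the functional whose
weight is multiplied by `w`. -/
noncomputable def christoffelTransform (w : K[X]) (M : K[X] →ₗ[K] K) : K[X] →ₗ[K] K :=
  M ∘ₗ LinearMap.mulLeft K w

@[simp]
lemma christoffelTransform_apply (w : K[X]) (M : K[X] →ₗ[K] K) (p : K[X]) :
    christoffelTransform w M p = M (w * p) := rfl

namespace IsOrthonormalFor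

variable {M : K[X] →ₗ[K] K} {P Q : Polynomial.Sequence K} {p q w : K[X]} {k : ℕ}

lemma apply_mul_of_degree_lt (hQ : IsOrthonormalFor Q M) (hp : p.degree < k) :
    M (p * Q k) = 0 := by
  have degreeLT_le_ker : degreeLT K k ≤ LinearMap.ker (M ∘ₗ LinearMap.mulRight K (Q k)) := by
    rw [← Q.span_degreeLT fun i _ ↦ (leadingCoeff_ne_zero.2 (Q.ne_zero i)).isUnit,
      Submodule.span_le]
    rintro _ ⟨i, hi, rfl⟩
    simp [hQ i k, (Set.mem_Iio.1 hi).ne]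
  exact degreeLT_le_ker (mem_degreeLT.2 hp)

lemma apply_mul_of_degree_le (hQ : IsOrthonormalFor Q M) (hp : p.degree ≤ k) :
    M (p * Q k) = p.coeff k / (Q k).leadingCoeff := by
  set c := p.coeff k / (Q k).leadingCoeff
  have coeff_eq : (p - c • Q k).coeff k = 0 := by
    have lc_eq : (Q k).coeff k = (Q k).leadingCoeff := by simp [leadingCoeff]
    rw [coeff_sub, coeff_smul, lc_eq, smul_eq_mul,
      div_mul_cancel₀ _ (leadingCoeff_ne_zero.2 (Q.ne_zero k)), sub_self]
  have degree_le : (p - c • Q k).degree ≤ k :=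
    (degree_sub_le _ _).trans (max_le hp ((degree_smul_le _ _).trans (Q.degree_eq k).le))
  have degree_lt : (p - c • Q k).degree < k :=
    degree_le.lt_of_ne fun h ↦ coeff_ne_zero_of_eq_degree h coeff_eq
  have := hQ.apply_mul_of_degree_lt degree_lt
  rwa [sub_mul, map_sub, smul_mul_assoc, map_smul, hQ, if_pos rfl, smul_eq_mul, mul_one,
    sub_eq_zero] at this

lemma apply_mul_of_natDegree_eq (hQ : IsOrthonormalFor Q M) (hp : p.natDegree = k) :
    M (p * Q k) = p.leadingCoeff / (Q k).leadingCoeff := by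
  rw [hQ.apply_mul_of_degree_le (natDegree_le_iff_degree_le.1 hp.le), ← hp, coeff_natDegree]

lemma eq_of_forall_apply_mul_eq (hQ : IsOrthonormalFor Q M)
    (h : ∀ k, M (p * Q k) = M (q * Q k)) : p = q := by
  by_contra hne
  have hpq : p - q ≠ 0 := sub_ne_zero.2 hne
  have apply_eq := hQ.apply_mul_of_natDegree_eq (p := p - q) rfl
  rw [sub_mul, map_sub, h, sub_self] at apply_eq
  exact div_ne_zero (leadingCoeff_ne_zero.2 hpq) (leadingCoeff_ne_zero.2 (Q.ne_zero _))
    apply_eq.symm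

lemma apply_mul_mul_of_lt (hP : IsOrthonormalFor P (christoffelTransform w M)) {j : ℕ}
    (hj : j < k) : M (w * P k * Q j) = 0 := by
  rw [mul_assoc, mul_comm (P k), ← christoffelTransform_apply]
  exact hP.apply_mul_of_degree_lt (by simpa using hj)

lemma apply_mul_mul_self (hP : IsOrthonormalFor P (christoffelTransform w M)) :
    M (w * P k * Q k) = (Q k).leadingCoeff / (P k).leadingCoeff := by
  rw [mul_assoc, mul_comm (P k), ← christoffelTransform_apply,
    hP.apply_mul_of_natDegree_eq (Q.natDegree_eq k)]

theorem mul_eq_three_term (hQ : IsOrthonormalFor Q M)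
    (hP : IsOrthonormalFor P (christoffelTransform w M)) (hw : w.natDegree = 2) (k : ℕ) :
    w * P k = (w.leadingCoeff * (P k).leadingCoeff / (Q (k + 2)).leadingCoeff) • Q (k + 2)
      + christoffelTransform w M (Q (k + 1) * P k) • Q (k + 1)
      + ((Q k).leadingCoeff / (P k).leadingCoeff) • Q k := by
  have hw0 : w ≠ 0 := ne_zero_of_natDegree_gt (hw ▸ two_pos)
  have natDegree_eq : (w * P k).natDegree = k + 2 := by
    rw [natDegree_mul hw0 (P.ne_zero k), hw, P.natDegree_eq, add_comm]
  refine hQ.eq_of_forall_apply_mul_eq fun j ↦ ?_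
  simp only [add_mul, smul_mul_assoc, map_add, map_smul, hQ _ j, smul_eq_mul]
  obtain hj | rfl | rfl | rfl | hj : j < k ∨ j = k ∨ j = k + 1 ∨ j = k + 2 ∨ k + 2 < j := by omega
  · rw [hP.apply_mul_mul_of_lt hj]
    grind
  · rw [hP.apply_mul_mul_self]
    simp
  · simp [mul_assoc, mul_comm (P k)]
  · rw [hQ.apply_mul_of_natDegree_eq natDegree_eq, leadingCoeff_mul]
    simp
  · rw [hQ.apply_mul_of_degree_lt
      (degree_le_natDegree.trans_lt (by rw [natDegree_eq]; exact_mod_cast hj))]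
    grind

end IsOrthonormalFor

end Orthonormal

section Positive

variable {K : Type*} [Field K] [LinearOrder K]

/-- A moment functional is positive on `s` if it is positive on every nonzero polynomial that is
nonnegative on `s`. This encodes a positive measure with infinite support contained in `s`. -/
def IsPositiveOn (M : K[X] →ₗ[K] K) (s : Set K) : Prop :=
  ∀ p : K[X], p ≠ 0 → (∀ x ∈ s, 0 ≤ p.eval x) → 0 < M p

variable [IsStrictOrderedRing K] {M : K[X] →ₗ[K] K} {s : Set K} {P Q : Polynomial.Sequence K}
  {p w : K[X]} {a c u v : K}

namespace IsPositiveOn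

lemma apply_mul_self_nonneg (hM : IsPositiveOn M s) (p : K[X]) : 0 ≤ M (p * p) := by
  rcases eq_or_ne p 0 with rfl | hp
  · simp
  · exact (hM _ (mul_ne_zero hp hp) fun x _ ↦ by simpa using mul_self_nonneg _).le

lemma apply_X_sub_C_mul_mul_self_pos (hM : IsPositiveOn M s) (hc : c ∈ lowerBounds s)
    (hp : p ≠ 0) : 0 < M ((X - C c) * (p * p)) := by
  refine hM _ (mul_ne_zero (X_sub_C_ne_zero c) (mul_ne_zero hp hp)) fun x hx ↦ ?_
  simpa using mul_nonneg (sub_nonneg.2 (hc hx)) (mul_self_nonneg (p.eval x))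

lemma apply_divByMonic_mul_pos (hM : IsPositiveOn M s) (hc : c ∈ lowerBounds s) (hp : p ≠ 0)
    (hroot : p.IsRoot c) : 0 < M (p /ₘ (X - C c) * p) := by
  set R := p /ₘ (X - C c)
  have hR : (X - C c) * R = p := mul_divByMonic_eq_iff_isRoot.2 hroot
  have hR0 : R ≠ 0 := right_ne_zero_of_mul (hR.trans_ne hp)
  have := hM.apply_X_sub_C_mul_mul_self_pos hc hR0
  rwa [← mul_assoc, hR, mul_comm] at this

end IsPositiveOn

namespace IsOrthonormalFor

lemma sq_apply_mul_le (hQ : IsOrthonormalFor Q M) (hM : IsPositiveOn M s) (p : K[X]) (k : ℕ) :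
    M (p * Q k) ^ 2 ≤ M (p * p) := by
  set α := M (p * Q k) with hα
  have expand : (p - α • Q k) * (p - α • Q k)
      = p * p - (2 * α) • (p * Q k) + α ^ 2 • (Q k * Q k) := by
    simp only [smul_eq_C_mul, map_mul, map_pow, map_ofNat]
    ring
  have := hM.apply_mul_self_nonneg (p - α • Q k)
  rw [expand, map_add, map_sub, map_smul, map_smul, ← hα, hQ, if_pos rfl] at this
  simp only [smul_eq_mul] at this
  linarith

lemma eval_ne_zero (hQ : IsOrthonormalFor Q M) (hM : IsPositiveOn M s)
    (hc : c ∈ lowerBounds s) (k : ℕ) : (Q k).eval c ≠ 0 := by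
  intro hroot
  refine (hM.apply_divByMonic_mul_pos hc (Q.ne_zero k) hroot).ne' (hQ.apply_mul_of_degree_lt ?_)
  simpa using degree_divByMonic_lt (Q k) (X - C c) (Q.ne_zero k) (by simp)

lemma eval_succ_mul_eval_neg (hQ : IsOrthonormalFor Q M) (hQpos : ∀ k, 0 < (Q k).leadingCoeff)
    (hM : IsPositiveOn M s) (hc : c ∈ lowerBounds s) (k : ℕ) :
    (Q (k + 1)).eval c * (Q k).eval c < 0 := by
  have hQk := hQ.eval_ne_zero hM hc k
  set t := (Q (k + 1)).eval c / (Q k).eval c with ht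
  -- `t` makes `S` vanish at `c`; positivity of `M` on `S ^ 2 / (X - c)` then forces `t < 0`.
  set S := Q (k + 1) - t • Q k with hS
  set R := S /ₘ (X - C c)
  have degree_lt : (t • Q k).degree < (Q (k + 1)).degree :=
    (degree_smul_le _ _).trans_lt (Q.degree_strictMono k.lt_succ_self)
  have S_degree : S.degree = (k + 1 : ℕ) := by
    rw [degree_sub_eq_left_of_degree_lt degree_lt, Q.degree_eq]
  have S_ne_zero : S ≠ 0 := ne_zero_of_degree_gt (n := ⊥) (by simp [S_degree])
  have S_root : S.IsRoot c := by simp [S, IsRoot, ht, hQk]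
  have R_natDegree : R.natDegree = k := by
    rw [natDegree_divByMonic _ (monic_X_sub_C c), natDegree_eq_of_degree_eq_some S_degree,
      natDegree_X_sub_C, Nat.add_sub_cancel]
  have R_leadingCoeff : R.leadingCoeff = (Q (k + 1)).leadingCoeff := by
    rw [leadingCoeff_divByMonic_X_sub_C _ (by rw [S_degree]; exact_mod_cast k.succ_ne_zero),
      hS, leadingCoeff_sub_of_degree_lt degree_lt]
  have R_degree_lt : R.degree < (k + 1 : ℕ) :=
    degree_le_natDegree.trans_lt (by rw [R_natDegree]; exact_mod_cast k.lt_succ_self)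
  have apply_pos : 0 < -(t * ((Q (k + 1)).leadingCoeff / (Q k).leadingCoeff)) := by
    have := hM.apply_divByMonic_mul_pos hc S_ne_zero S_root
    rwa [hS, mul_sub, map_sub, mul_smul_comm, map_smul,
      hQ.apply_mul_of_degree_lt R_degree_lt,
      hQ.apply_mul_of_natDegree_eq R_natDegree, R_leadingCoeff, zero_sub, smul_eq_mul] at this
  have t_neg : t < 0 :=
    neg_of_mul_neg_left (neg_pos.1 apply_pos) (div_pos (hQpos _) (hQpos _)).le
  rw [← div_mul_cancel₀ ((Q (k + 1)).eval c) hQk, mul_assoc]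
  exact mul_neg_of_neg_of_pos t_neg (mul_self_pos.2 hQk)

theorem christoffelTransform_apply_succ_mul_pos (hQ : IsOrthonormalFor Q M)
    (hP : IsOrthonormalFor P (christoffelTransform w M)) (hQpos : ∀ k, 0 < (Q k).leadingCoeff)
    (hPpos : ∀ k, 0 < (P k).leadingCoeff) (hM : IsPositiveOn M s) (hw : w.natDegree = 2)
    (hwpos : 0 < w.leadingCoeff) (hroot : w.IsRoot v) (hv : v ∈ lowerBounds s) (k : ℕ) :
    0 < christoffelTransform w M (Q (k + 1) * P k) := by
  set A := w.leadingCoeff * (P k).leadingCoeff / (Q (k + 2)).leadingCoeff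
  set B := christoffelTransform w M (Q (k + 1) * P k)
  set G := (Q k).leadingCoeff / (P k).leadingCoeff
  have hA : 0 < A := div_pos (mul_pos hwpos (hPpos k)) (hQpos _)
  have hG : 0 < G := div_pos (hQpos k) (hPpos k)
  have eval_eq : 0 = A * (Q (k + 2)).eval v + B * (Q (k + 1)).eval v + G * (Q k).eval v := by
    simpa only [eval_mul, eval_add, eval_smul, smul_eq_mul, hroot.eq_zero, zero_mul]
      using congrArg (eval v) (hQ.mul_eq_three_term hP hw k)
  have B_mul_sq : B * (Q (k + 1)).eval v ^ 2 =
      -(A * ((Q (k + 2)).eval v * (Q (k + 1)).eval v)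
        + G * ((Q (k + 1)).eval v * (Q k).eval v)) := by
    linear_combination -(Q (k + 1)).eval v * eval_eq
  refine pos_of_mul_pos_left ?_ (sq_nonneg ((Q (k + 1)).eval v))
  rw [B_mul_sq, neg_pos]
  exact add_neg (mul_neg_of_pos_of_neg hA (hQ.eval_succ_mul_eval_neg hQpos hM hv (k + 1)))
    (mul_neg_of_pos_of_neg hG (hQ.eval_succ_mul_eval_neg hQpos hM hv k))

-- Bessel's inequality for `T = (X - u) * P k`, as `(X - u) * (X - v) * P k ^ 2` dominates `T ^ 2`.
theorem mul_sq_leadingCoeff_div_lt_one (hQ : IsOrthonormalFor Q M)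
    (hP : IsOrthonormalFor P (christoffelTransform (C a * ((X - C u) * (X - C v))) M))
    (hM : IsPositiveOn M s) (ha : 0 < a) (hu : u ∈ lowerBounds s) (huv : v < u) (k : ℕ) :
    a * ((P k).leadingCoeff / (Q (k + 1)).leadingCoeff) ^ 2 < 1 := by
  set T := (X - C u) * P k with hT
  have T_natDegree : T.natDegree = k + 1 := by
    rw [natDegree_mul (X_sub_C_ne_zero u) (P.ne_zero k), natDegree_X_sub_C, P.natDegree_eq,
      add_comm]
  have apply_T_mul : M (T * Q (k + 1)) = (P k).leadingCoeff / (Q (k + 1)).leadingCoeff := by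
    rw [hQ.apply_mul_of_natDegree_eq T_natDegree, leadingCoeff_mul, leadingCoeff_X_sub_C, one_mul]
  have apply_T_sq_lt : a * M (T * T) < 1 := by
    have split : C a * ((X - C u) * (X - C v)) * (P k * P k)
        = a • (T * T) + (a * (u - v)) • ((X - C u) * (P k * P k)) := by
      simp only [hT, smul_eq_C_mul, map_mul, map_sub]
      ring
    have norm_eq : a * M (T * T) + a * (u - v) * M ((X - C u) * (P k * P k)) = 1 := by
      simpa [split] using hP k k
    have := mul_pos (mul_pos ha (sub_pos.2 huv))
      (hM.apply_X_sub_C_mul_mul_self_pos hu (P.ne_zero k))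
    linarith
  rw [← apply_T_mul]
  exact (mul_le_mul_of_nonneg_left (hQ.sq_apply_mul_le hM T (k + 1)) ha.le).trans_lt apply_T_sq_lt

end IsOrthonormalFor

end Positive

section Quadratic

variable {K : Type*} [Field K]

lemma natDegree_C_mul_X_sub_C_mul_X_sub_C {a : K} (ha : a ≠ 0) (u v : K) :
    (C a * ((X - C u) * (X - C v))).natDegree = 2 := by
  rw [natDegree_C_mul ha, natDegree_mul (X_sub_C_ne_zero u) (X_sub_C_ne_zero v),
    natDegree_X_sub_C, natDegree_X_sub_C]

lemma leadingCoeff_C_mul_X_sub_C_mul_X_sub_C (a u v : K) :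
    (C a * ((X - C u) * (X - C v))).leadingCoeff = a := by
  simp only [leadingCoeff_mul, leadingCoeff_C, leadingCoeff_X_sub_C, mul_one]

end Quadratic

section RootSum

variable {p q : ℝ[X]} {n : ℕ}

lemma rootSum_eq_neg_nextCoeff_div (p : ℝ[X]) : rootSum p = -p.nextCoeff / p.leadingCoeff := by
  rw [rootSum, nextCoeff]
  split_ifs <;> simp

lemma rootSum_C (c : ℝ) : rootSum (C c) = 0 := by simp [rootSum]

lemma rootSum_X_sub_C (c : ℝ) : rootSum (X - C c) = c := by
  simp [rootSum_eq_neg_nextCoeff_div]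

lemma rootSum_mul (hp : p ≠ 0) (hq : q ≠ 0) : rootSum (p * q) = rootSum p + rootSum q := by
  have rootSum_eq (r : ℝ[X]) : rootSum r = -(r * C r.leadingCoeff⁻¹).nextCoeff := by
    rw [rootSum_eq_neg_nextCoeff_div, nextCoeff_mul_C, neg_div, div_eq_mul_inv]
  have normalize_mul : p * q * C (p * q).leadingCoeff⁻¹
      = p * C p.leadingCoeff⁻¹ * (q * C q.leadingCoeff⁻¹) := by
    rw [leadingCoeff_mul, mul_inv, C_mul]
    ring
  rw [rootSum_eq, normalize_mul, (monic_mul_leadingCoeff_inv hp).nextCoeff_mul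
    (monic_mul_leadingCoeff_inv hq), neg_add, ← rootSum_eq, ← rootSum_eq]

lemma degree_sub_le_of_rootSum_eq (hp : p.natDegree = n + 2) (hq : q.natDegree = n + 2)
    (hlc : p.leadingCoeff = q.leadingCoeff) (hsum : rootSum p = rootSum q) :
    (p - q).degree ≤ (n : WithBot ℕ) := by
  have nextCoeff_eq : p.nextCoeff = q.nextCoeff := by
    have hq0 : q.leadingCoeff ≠ 0 :=
      leadingCoeff_ne_zero.2 (ne_zero_of_natDegree_gt (n := 0) (by omega))
    rwa [rootSum_eq_neg_nextCoeff_div, rootSum_eq_neg_nextCoeff_div, hlc, div_left_inj' hq0,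
      neg_inj] at hsum
  rw [leadingCoeff, leadingCoeff, hp, hq] at hlc
  rw [nextCoeff_of_natDegree_pos (by omega), nextCoeff_of_natDegree_pos (by omega), hp, hq]
    at nextCoeff_eq
  rw [degree_le_iff_coeff_zero]
  intro m hm
  rw [coeff_sub, sub_eq_zero]
  obtain rfl | rfl | hm : m = n + 1 ∨ m = n + 2 ∨ n + 2 < m := by
    have : n < m := by exact_mod_cast hm
    omega
  · exact nextCoeff_eq
  · exact hlc
  · rw [coeff_eq_zero_of_natDegree_lt (hp ▸ hm), coeff_eq_zero_of_natDegree_lt (hq ▸ hm)]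

lemma degree_sub_smul_X_sub_C_mul_le (hp : p.natDegree = n + 2) (hq : q.natDegree = n + 1) :
    (p - (p.leadingCoeff / q.leadingCoeff) • ((X - C (rootSum p - rootSum q)) * q)).degree
      ≤ (n : WithBot ℕ) := by
  have hp0 : p ≠ 0 := ne_zero_of_natDegree_gt (n := 0) (by omega)
  have hq0 : q ≠ 0 := ne_zero_of_natDegree_gt (n := 0) (by omega)
  have hX := X_sub_C_ne_zero (rootSum p - rootSum q)
  have hA : p.leadingCoeff / q.leadingCoeff ≠ 0 :=
    div_ne_zero (leadingCoeff_ne_zero.2 hp0) (leadingCoeff_ne_zero.2 hq0)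
  apply degree_sub_le_of_rootSum_eq hp
  · rw [natDegree_smul _ hA, natDegree_mul hX hq0, natDegree_X_sub_C, hq]
    omega
  · rw [smul_eq_C_mul, leadingCoeff_mul, leadingCoeff_mul, leadingCoeff_C, leadingCoeff_X_sub_C,
      one_mul, div_mul_cancel₀ _ (leadingCoeff_ne_zero.2 hq0)]
  · rw [smul_eq_C_mul, rootSum_mul (C_ne_zero.2 hA) (mul_ne_zero hX hq0), rootSum_mul hX hq0,
      rootSum_C, rootSum_X_sub_C, zero_add, sub_add_cancel]

lemma rootSum_C_mul_X_sub_C_mul_X_sub_C {a : ℝ} (ha : a ≠ 0) (u v : ℝ) :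
    rootSum (C a * ((X - C u) * (X - C v))) = u + v := by
  have hu := X_sub_C_ne_zero u
  have hv := X_sub_C_ne_zero v
  rw [rootSum_mul (C_ne_zero.2 ha) (mul_ne_zero hu hv), rootSum_mul hu hv, rootSum_C,
    rootSum_X_sub_C, rootSum_X_sub_C, zero_add]

end RootSum

namespace IsOrthonormalFor

variable {M : ℝ[X] →ₗ[ℝ] ℝ} {P Q : Polynomial.Sequence ℝ} {w : ℝ[X]} {s : Set ℝ} {a u v : ℝ}

theorem mul_eq_two_term (hQ : IsOrthonormalFor Q M)
    (hP : IsOrthonormalFor P (christoffelTransform w M)) (hw : w.natDegree = 2) (k : ℕ) :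
    w * P k = (w.leadingCoeff * (P k).leadingCoeff / (Q (k + 1)).leadingCoeff) •
        ((X - C (rootSum w + rootSum (P k) - rootSum (Q (k + 1)))) * Q (k + 1))
      + ((Q k).leadingCoeff / (P k).leadingCoeff
          * (1 - w.leadingCoeff * ((P k).leadingCoeff / (Q (k + 1)).leadingCoeff) ^ 2)) • Q k := by
  set A := w.leadingCoeff * (P k).leadingCoeff / (Q (k + 1)).leadingCoeff with hA
  set t := rootSum w + rootSum (P k) - rootSum (Q (k + 1)) with ht
  have hw0 : w ≠ 0 := ne_zero_of_natDegree_gt (hw ▸ two_pos)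
  have natDegree_X_mul (j : ℕ) : ((X - C t) * Q j).natDegree = j + 1 := by
    rw [natDegree_mul (X_sub_C_ne_zero t) (Q.ne_zero j), natDegree_X_sub_C, Q.natDegree_eq,
      add_comm]
  have degree_le : (w * P k - A • ((X - C t) * Q (k + 1))).degree ≤ (k : WithBot ℕ) := by
    rw [hA, ht, ← leadingCoeff_mul, ← rootSum_mul hw0 (P.ne_zero k)]
    refine degree_sub_smul_X_sub_C_mul_le ?_ (Q.natDegree_eq _)
    rw [natDegree_mul hw0 (P.ne_zero k), hw, P.natDegree_eq, add_comm]
  have apply_remainder_mul (j : ℕ) : M ((w * P k - A • ((X - C t) * Q (k + 1))) * Q j)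
      = M (w * P k * Q j) - A * M ((X - C t) * Q j * Q (k + 1)) := by
    rw [sub_mul, map_sub, smul_mul_assoc, map_smul, smul_eq_mul, mul_right_comm (X - C t)]
  rw [← sub_eq_iff_eq_add']
  refine hQ.eq_of_forall_apply_mul_eq fun j ↦ ?_
  rw [smul_mul_assoc, map_smul, hQ, smul_eq_mul]
  obtain hj | rfl | hj := lt_trichotomy j k
  · have degree_lt : ((X - C t) * Q j).degree < ((k + 1 : ℕ) : WithBot ℕ) :=
      degree_le_natDegree.trans_lt (by rw [natDegree_X_mul]; exact_mod_cast Nat.succ_lt_succ hj)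
    rw [apply_remainder_mul, hP.apply_mul_mul_of_lt hj, hQ.apply_mul_of_degree_lt degree_lt]
    simp [hj.ne']
  · have hPlc : (P j).leadingCoeff ≠ 0 := leadingCoeff_ne_zero.2 (P.ne_zero j)
    rw [apply_remainder_mul, hP.apply_mul_mul_self,
      hQ.apply_mul_of_natDegree_eq (natDegree_X_mul j), leadingCoeff_mul, leadingCoeff_X_sub_C,
      if_pos rfl, hA]
    field_simp
  · rw [hQ.apply_mul_of_degree_lt (degree_le.trans_lt (by exact_mod_cast hj)), if_neg hj.ne,
      mul_zero]

theorem lt_rootSum_sub_rootSum (hQ : IsOrthonormalFor Q M)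
    (hP : IsOrthonormalFor P (christoffelTransform (C a * ((X - C u) * (X - C v))) M))
    (hQpos : ∀ k, 0 < (Q k).leadingCoeff) (hPpos : ∀ k, 0 < (P k).leadingCoeff)
    (hM : IsPositiveOn M s) (ha : 0 < a) (hu : u ∈ lowerBounds s) (huv : v < u) (k : ℕ) :
    u < rootSum (Q (k + 1)) - rootSum (P k) := by
  have hv : v ∈ lowerBounds s := fun x hx ↦ huv.le.trans (hu hx)
  set w := C a * ((X - C u) * (X - C v))
  have w_leadingCoeff : w.leadingCoeff = a := leadingCoeff_C_mul_X_sub_C_mul_X_sub_C a u v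
  have w_rootSum : rootSum w = u + v := rootSum_C_mul_X_sub_C_mul_X_sub_C ha.ne' u v
  have w_root : w.eval v = 0 := by simp [w]
  set A := a * (P k).leadingCoeff / (Q (k + 1)).leadingCoeff
  set G := (Q k).leadingCoeff / (P k).leadingCoeff
    * (1 - a * ((P k).leadingCoeff / (Q (k + 1)).leadingCoeff) ^ 2)
  have hA : 0 < A := div_pos (mul_pos ha (hPpos k)) (hQpos _)
  have hG : 0 < G := mul_pos (div_pos (hQpos k) (hPpos k))
    (sub_pos.2 (hQ.mul_sq_leadingCoeff_div_lt_one hP hM ha hu huv k))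
  have eval_eq : 0 = A * ((v - (u + v + rootSum (P k) - rootSum (Q (k + 1))))
      * (Q (k + 1)).eval v) + G * (Q k).eval v := by
    have := congrArg (eval v)
      (hQ.mul_eq_two_term hP (natDegree_C_mul_X_sub_C_mul_X_sub_C ha.ne' u v) k)
    simpa only [w_leadingCoeff, w_rootSum, w_root, eval_mul, eval_add, eval_sub, eval_smul, eval_X,
      eval_C, smul_eq_mul, zero_mul] using this
  have mul_sq_eq : A * (Q (k + 1)).eval v ^ 2 * (rootSum (Q (k + 1)) - rootSum (P k) - u)
      = -(G * ((Q (k + 1)).eval v * (Q k).eval v)) := by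
    linear_combination -(Q (k + 1)).eval v * eval_eq
  have mul_sq_pos :
      0 < A * (Q (k + 1)).eval v ^ 2 * (rootSum (Q (k + 1)) - rootSum (P k) - u) := by
    rw [mul_sq_eq, neg_pos]
    exact mul_neg_of_pos_of_neg hG (hQ.eval_succ_mul_eval_neg hQpos hM hv k)
  exact sub_pos.1 (pos_of_mul_pos_right mul_sq_pos (by positivity))

end IsOrthonormalFor

lemma integral_pos_of_ae_pos {α : Type*} [MeasurableSpace α] {μ : Measure α} {f : α → ℝ}
    (hμ : μ ≠ 0) (hf : Integrable f μ) (hpos : ∀ᵐ x ∂μ, 0 < f x) : 0 < ∫ x, f x ∂μ := by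
  have support_eq : Function.support f =ᵐ[μ] Set.univ :=
    Filter.eventuallyEq_univ.2 (hpos.mono fun _ hx ↦ hx.ne')
  rw [integral_pos_iff_support_of_nonneg_ae (hpos.mono fun _ hx ↦ hx.le) hf,
    measure_congr support_eq]
  exact Measure.measure_univ_pos.2 hμ

section WeightedIntegral

variable {μ : Measure ℝ} {w : ℝ → ℝ} {s : Set ℝ}

/-- The moment functional `p ↦ ∫ p w dμ` of a weight `w` against which all polynomials are
integrable. -/
noncomputable def weightedIntegral (μ : Measure ℝ) (w : ℝ → ℝ)
    (hw : ∀ p : ℝ[X], Integrable (fun x ↦ p.eval x * w x) μ) : ℝ[X] →ₗ[ℝ] ℝ where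
  toFun p := ∫ x, p.eval x * w x ∂μ
  map_add' p q := by
    simp only [eval_add, add_mul]
    exact integral_add (hw p) (hw q)
  map_smul' c p := by
    simp only [eval_smul, smul_eq_mul, mul_assoc, RingHom.id_apply]
    exact integral_const_mul _ _

lemma isPositiveOn_weightedIntegral [NullSingletonClass μ] (hμ : μ ≠ 0)
    (hw : ∀ p : ℝ[X], Integrable (fun x ↦ p.eval x * w x) μ)
    (hws : ∀ᵐ x ∂μ, x ∈ s ∧ 0 < w x) : IsPositiveOn (weightedIntegral μ w hw) s := by
  intro p hp hps
  have roots_null : ∀ᵐ x ∂μ, x ∉ p.roots.toFinset :=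
    measure_eq_zero_iff_ae_notMem.1 (Finset.measure_zero p.roots.toFinset μ)
  have integrand_pos : ∀ᵐ x ∂μ, 0 < p.eval x * w x := by
    filter_upwards [hws, roots_null] with x ⟨hxs, hwx⟩ hx
    have eval_ne : p.eval x ≠ 0 := fun h ↦ hx (by simp [hp, h])
    exact mul_pos ((hps x hxs).lt_of_ne' eval_ne) hwx
  exact integral_pos_of_ae_pos hμ (hw p) integrand_pos

end WeightedIntegral

section Weight

open Filter Asymptotics

variable {l : ℕ} {ζ x : ℝ}

lemma isBigO_eval_exp_mul (p : ℝ[X]) {b : ℝ} (hb : 0 < b) :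
    (fun x ↦ p.eval x) =O[atTop] fun x ↦ Real.exp (b * x) := by
  induction p using Polynomial.induction_on' with
  | add p q hp hq => simpa only [eval_add] using hp.add hq
  | monomial n c =>
    simpa only [eval_monomial] using (isLittleO_pow_exp_pos_mul_atTop n hb).isBigO.const_mul_left c

lemma integrableOn_cosh_two_mul_mul_exp (hζ : 0 < ζ) :
    IntegrableOn (fun t ↦ Real.cosh (2 * t) * Real.exp (-ζ * Real.cosh t)) (Set.Ioi 0) := by
  have le_cosh (t : ℝ) : t ≤ Real.cosh t := by
    rcases le_total t 0 with ht | ht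
    · exact ht.trans (Real.cosh_pos t).le
    · exact (Real.self_le_sinh_iff.2 ht).trans (Real.sinh_lt_cosh t).le
  have cosh_isBigO : (fun t ↦ Real.cosh (2 * t)) =O[atTop]
      fun t ↦ Real.exp (ζ / 2 * Real.cosh t) := by
    have := (isBigO_eval_exp_mul (2 * X ^ 2 - 1) (half_pos hζ)).comp_tendsto
      (tendsto_atTop_mono le_cosh tendsto_id)
    refine this.congr_left fun t ↦ ?_
    simp only [Function.comp_apply, eval_sub, eval_mul, eval_pow, eval_X, eval_ofNat, eval_one]
    rw [Real.cosh_two_mul, Real.sinh_sq]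
    ring
  have isBigO : (fun t ↦ Real.cosh (2 * t) * Real.exp (-ζ * Real.cosh t)) =O[atTop]
      fun t ↦ Real.exp (-(ζ / 2) * t) := by
    refine (cosh_isBigO.mul (isBigO_refl _ _)).trans (IsBigO.of_norm_le fun t ↦ ?_)
    rw [← Real.exp_add, Real.norm_of_nonneg (Real.exp_pos _).le]
    gcongr
    nlinarith [le_cosh t]
  exact integrable_of_isBigO_exp_neg (half_pos hζ) (by fun_prop) isBigO

lemma K2_pos (hζ : 0 < ζ) : 0 < K2 ζ :=
  integral_pos_of_ae_pos (by simp) (integrableOn_cosh_two_mul_mul_exp hζ)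
    (.of_forall fun _ ↦ mul_pos (Real.cosh_pos _) (Real.exp_pos _))

lemma wgt_pos (l : ℕ) (hζ : 0 < ζ) (hx : 1 < x) : 0 < wgt l ζ x := by
  have hK := K2_pos hζ
  have hpow : 0 < (x ^ 2 - 1) ^ ((l : ℝ) + 1 / 2) := Real.rpow_pos_of_pos (by nlinarith) _
  unfold wgt
  positivity

lemma wgt_eq_mul_wgt_pred (hl : 1 ≤ l) (ζ : ℝ) (hx : 1 < x) :
    wgt l ζ x = (2 * (l : ℝ) - 1) / (2 * (l : ℝ) + 1) * ((x ^ 2 - 1) * wgt (l - 1) ζ x) := by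
  have hl' : (1 : ℝ) ≤ l := by exact_mod_cast hl
  have hn : (l : ℝ) * 2 - 1 ≠ 0 := by linarith
  have hpow : (x ^ 2 - 1) ^ ((l : ℝ) + 1 / 2)
      = (x ^ 2 - 1) ^ ((l : ℝ) - 1 + 1 / 2) * (x ^ 2 - 1) := by
    rw [← Real.rpow_add_one (by nlinarith)]
    ring_nf
  have hden : 2 * ((l : ℝ) - 1) + 1 = 2 * l - 1 := by ring
  rw [wgt, wgt, Nat.cast_sub hl, Nat.cast_one, hpow, hden]
  field_simp

lemma integrable_eval_mul_wgt (l : ℕ) (hζ : 0 < ζ) (p : ℝ[X]) :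
    IntegrableOn (fun x ↦ p.eval x * wgt l ζ x) (Set.Ioi 1) := by
  set s : ℝ := (l : ℝ) + 1 / 2
  have hs : 0 < s := by positivity
  have hζ4 : 0 < ζ / 4 := by positivity
  have pow_isBigO : (fun x : ℝ ↦ (x ^ 2 - 1) ^ s) =O[atTop] fun x ↦ Real.exp (ζ / 4 * x) := by
    have quadratic := isBigO_eval_exp_mul (X ^ 2 - 1) (div_pos hζ4 hs)
    simp only [eval_sub, eval_pow, eval_X, eval_one] at quadratic
    refine (quadratic.rpow hs.le (.of_forall fun x ↦ (Real.exp_pos _).le)).congr_right fun x ↦ ?_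
    rw [← Real.exp_mul]
    congr 1
    field_simp
  have isBigO : (fun x ↦ p.eval x * ((x ^ 2 - 1) ^ s * Real.exp (-ζ * x))) =O[atTop]
      fun x ↦ Real.exp (-(ζ / 2) * x) := by
    refine ((isBigO_eval_exp_mul p hζ4).mul (pow_isBigO.mul (isBigO_refl _ _))).congr_right
      fun x ↦ ?_
    rw [← Real.exp_add, ← Real.exp_add]
    ring_nf
  have continuous_integrand : Continuous fun x ↦ p.eval x * ((x ^ 2 - 1) ^ s * Real.exp (-ζ * x)) :=
    p.continuous.mul
      (((by fun_prop : Continuous fun x : ℝ ↦ x ^ 2 - 1).rpow_const fun _ ↦ .inr hs.le).mul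
        (by fun_prop))
  have integrableOn : IntegrableOn _ (Set.Ioi (1 : ℝ)) :=
    integrable_of_isBigO_exp_neg (half_pos hζ) continuous_integrand.continuousOn isBigO
  refine (integrableOn.const_mul (ζ / ((2 * (l : ℝ) + 1) * K2 ζ))).congr (.of_forall fun x ↦ ?_)
  simp only [wgt]
  ring

/-- The moment functional `p ↦ ∫₁^∞ p ω^{(ℓ)}` of the weight `ω^{(ℓ)}(·;ζ)`. -/
noncomputable def wgtFunctional (l : ℕ) (hζ : 0 < ζ) : ℝ[X] →ₗ[ℝ] ℝ :=
  weightedIntegral (volume.restrict (Set.Ioi 1)) (wgt l ζ) (integrable_eval_mul_wgt l hζ)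

lemma wgtFunctional_apply (l : ℕ) (hζ : 0 < ζ) (p : ℝ[X]) :
    wgtFunctional l hζ p = ∫ x in Set.Ioi 1, p.eval x * wgt l ζ x := rfl

lemma isPositiveOn_wgtFunctional (l : ℕ) (hζ : 0 < ζ) :
    IsPositiveOn (wgtFunctional l hζ) (Set.Ioi 1) :=
  isPositiveOn_weightedIntegral (by simp) _
    ((ae_restrict_mem measurableSet_Ioi).mono fun _ hx ↦ ⟨hx, wgt_pos l hζ hx⟩)

lemma christoffelTransform_wgtFunctional (hl : 1 ≤ l) (hζ : 0 < ζ) :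
    christoffelTransform
        (C ((2 * (l : ℝ) - 1) / (2 * (l : ℝ) + 1)) * ((X - C 1) * (X - C (-1))))
        (wgtFunctional (l - 1) hζ) = wgtFunctional l hζ := by
  refine LinearMap.ext fun p ↦ ?_
  rw [christoffelTransform_apply, wgtFunctional_apply, wgtFunctional_apply]
  refine setIntegral_congr_fun measurableSet_Ioi fun x hx ↦ ?_
  simp only [wgt_eq_mul_wgt_pred hl ζ hx, eval_mul, eval_sub, eval_C, eval_X]
  ring

lemma IsOrthoFam.isOrthonormalFor {P : ℕ → ℝ[X]} (hP : IsOrthoFam l ζ P) (hζ : 0 < ζ) :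
    IsOrthonormalFor ⟨P, hP.1⟩ (wgtFunctional l hζ) := by
  intro i k
  rw [← hP.2.2 i k, wgtFunctional_apply]
  simp only [eval_mul]

lemma qC_eq_wgtFunctional (hζ : 0 < ζ) (P Q : ℕ → ℝ[X]) (k : ℕ) :
    qC l ζ P Q k = wgtFunctional l hζ (Q (k + 1) * P k) := by
  simp only [qC, wgtFunctional_apply, eval_mul]

lemma ratio_mul_ptC_sq (l : ℕ) (P Q : ℕ → ℝ[X]) (k : ℕ) :
    (2 * (l : ℝ) + 1) / (2 * (l : ℝ) - 1) * ptC l P Q k ^ 2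
      = (2 * (l : ℝ) - 1) / (2 * (l : ℝ) + 1)
        * ((P k).leadingCoeff / (Q (k + 1)).leadingCoeff) ^ 2 := by
  rw [ptC]
  field_simp

end Weight

theorem stmt13 (l : ℕ) (hl : 1 ≤ l) (ζ : ℝ) (hζ : 0 < ζ)
    (P Q : ℕ → Polynomial ℝ)
    (hP : IsOrthoFam l ζ P) (hQ : IsOrthoFam (l - 1) ζ Q) :
    (∀ k : ℕ, 0 < pC P Q k) ∧
    (∀ k : ℕ, 0 < qC l ζ P Q k) ∧
    (∀ k : ℕ, 1 ≤ k → 0 < rC l P Q k) ∧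
    (∀ k : ℕ, 0 < ptC l P Q k) ∧
    (∀ k : ℕ, 0 < qtC P Q k) ∧
    (∀ k : ℕ, 0 < rtC l P Q k) := by
  have hl' : (1 : ℝ) ≤ l := by exact_mod_cast hl
  have ha : 0 < (2 * (l : ℝ) - 1) / (2 * (l : ℝ) + 1) := div_pos (by linarith) (by linarith)
  have hM := isPositiveOn_wgtFunctional (l - 1) hζ
  have hQM := hQ.isOrthonormalFor hζ
  have hPM := hP.isOrthonormalFor hζ
  rw [← christoffelTransform_wgtFunctional hl] at hPM
  have hcP := hP.2.1
  have hcQ := hQ.2.1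
  have h1 : (1 : ℝ) ∈ lowerBounds (Set.Ioi 1) := fun _ hx ↦ le_of_lt hx
  have hneg1 : (-1 : ℝ) ∈ lowerBounds (Set.Ioi 1) := fun x hx ↦ by linarith [h1 hx]
  have hp (k : ℕ) : 0 < pC P Q k := div_pos (hcQ k) (hcP k)
  refine ⟨hp, fun k ↦ ?_, fun k hk ↦ ?_, fun k ↦ div_pos (mul_pos ha (hcP _)) (hcQ _),
    fun k ↦ ?_, fun k ↦ mul_pos (hp k) (sub_pos.2 ?_)⟩
  · rw [qC_eq_wgtFunctional hζ, ← christoffelTransform_wgtFunctional hl]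
    exact hQM.christoffelTransform_apply_succ_mul_pos hPM hcQ hcP hM
      (natDegree_C_mul_X_sub_C_mul_X_sub_C ha.ne' _ _)
      (by rwa [leadingCoeff_C_mul_X_sub_C_mul_X_sub_C]) (by simp) hneg1 k
  · rw [rC, if_neg (by omega)]
    exact div_pos (mul_pos ha (hcP _)) (hcQ _)
  · exact one_pos.trans (hQM.lt_rootSum_sub_rootSum hPM hcQ hcP hM ha h1 (by norm_num) k)
  · rw [ratio_mul_ptC_sq]
    exact hQM.mul_sq_leadingCoeff_div_lt_one hPM hM ha h1 (by norm_num) k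
end

section
/- Fix ℓ ∈ ℕ, k ≥ 1, and an open interval I ⊆ (0,∞). Suppose that for each ζ ∈ I, (P_j(·;ζ))_{j∈ℕ} is an orthonormal family for the weight ω^{(ℓ)}(·;ζ) and each coefficient of P_j(·;ζ) is differentiable in ζ on I. Let x : I → (1,∞) be a differentiable function such that P_k(x(ζ);ζ) = 0 for all ζ ∈ I. Then x′(ζ) < 0 for every ζ ∈ I; that is, every zero of P_k^{(ℓ)}(·;ζ) is a strictly decreasing function of the parameter ζ. -/
open MeasureTheory Polynomial

/-!
Write `L` for the functional `q ↦ ∫ q(y) e^{-ζy} dμ(y)`, let `p = p_k(·; ζ)` be orthogonal to all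
polynomials of degree `< k`, and let `Q = p / (X - a)` at a zero `a` of `p`. Orthogonality gives the
Gauss quadrature identity `L(fQ) = f(a) L(Q)` whenever `deg f ≤ k`; with `f = Q` and `Q(a) = p'(a)`
it yields `p'(a) L(Q) = L(Q²) > 0`. Differentiating `L(pQ) = 0` in `ζ`, with `Q` kept fixed, gives
`L(ṗQ) = L(X p Q) = L(p²)`, so the same identity with `f = ṗ` yields `ṗ(a) L(Q) = L(p²) > 0`.
Hence `a' = -ṗ(a) / p'(a) < 0`. Only the dependence on `ζ` through `e^{-ζy}` matters, not the base
measure `μ`, as long as its support is infinite.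
-/

section MomentFunctional

variable {R : Type*} [CommRing R]

/-- `p` is a `k`-th orthogonal polynomial, of arbitrary normalization, for the moment functional
`L`. -/
structure IsOrthogonalPolynomial (L : R[X] →ₗ[R] R) (k : ℕ) (p : R[X]) : Prop where
  degree_eq : p.degree = k
  map_mul_eq_zero : ∀ q : R[X], q.degree < k → L (q * p) = 0

/-- Positive definiteness of a moment functional: the form `(p, q) ↦ L (p * q)` is positive
definite. -/
def IsPosDefFunctional [Preorder R] (L : R[X] →ₗ[R] R) : Prop :=
  ∀ q : R[X], q ≠ 0 → 0 < L (q * q)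

lemma degree_divByMonic_X_sub_C_lt [Nontrivial R] {f : R[X]} {k : ℕ} (hf : f.degree ≤ k) (a : R) :
    (f /ₘ (X - C a)).degree < k := by
  rcases eq_or_ne f 0 with rfl | hf0
  · simp
  · exact (degree_divByMonic_lt f _ hf0 (by simp)).trans_le hf

namespace IsOrthogonalPolynomial

lemma of_sequence {K : Type*} [Field K] (L : K[X] →ₗ[K] K) (S : Polynomial.Sequence K) {k : ℕ}
    (hS : ∀ i < k, L (S i * S k) = 0) : IsOrthogonalPolynomial L k (S k) where
  degree_eq := S.degree_eq k
  map_mul_eq_zero q hq := by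
    have hspan : Submodule.span K (S '' Set.Iio k) = degreeLT K k :=
      S.span_degreeLT fun i _ => (leadingCoeff_ne_zero.2 (S.ne_zero i)).isUnit
    have hker : Submodule.span K (S '' Set.Iio k) ≤
        LinearMap.ker (L ∘ₗ LinearMap.mulRight K (S k)) := by
      rw [Submodule.span_le, Set.image_subset_iff]
      exact hS
    exact hker (hspan ▸ mem_degreeLT.2 hq)

variable {L : R[X] →ₗ[R] R} {k : ℕ} {p : R[X]} {a : R}

lemma map_mul_divByMonic [Nontrivial R] (hp : IsOrthogonalPolynomial L k p) (ha : p.IsRoot a)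
    {f : R[X]} (hf : f.degree ≤ k) :
    L (f * (p /ₘ (X - C a))) = f.eval a * L (p /ₘ (X - C a)) := by
  set Q := p /ₘ (X - C a)
  have hQ : (X - C a) * Q = p := mul_divByMonic_eq_iff_isRoot.2 ha
  have hsplit : C (f.eval a) + (X - C a) * (f /ₘ (X - C a)) = f := by
    rw [← modByMonic_X_sub_C_eq_C_eval, modByMonic_add_div]
  have hfQ : f * Q = f.eval a • Q + (f /ₘ (X - C a)) * p := by
    rw [smul_eq_C_mul]
    linear_combination (-Q) * hsplit + (f /ₘ (X - C a)) * hQ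
  rw [hfQ, map_add, map_smul, smul_eq_mul,
    hp.map_mul_eq_zero _ (degree_divByMonic_X_sub_C_lt hf a), add_zero]

lemma map_X_mul_mul_divByMonic [Nontrivial R] (hp : IsOrthogonalPolynomial L k p)
    (ha : p.IsRoot a) : L (X * (p * (p /ₘ (X - C a)))) = L (p * p) := by
  set Q := p /ₘ (X - C a)
  have hQ : (X - C a) * Q = p := mul_divByMonic_eq_iff_isRoot.2 ha
  have hXpQ : X * (p * Q) = p * p + a • (Q * p) := by
    rw [smul_eq_C_mul]
    linear_combination p * hQ
  rw [hXpQ, map_add, map_smul,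
    hp.map_mul_eq_zero Q (degree_divByMonic_X_sub_C_lt hp.degree_eq.le a), smul_zero, add_zero]

end IsOrthogonalPolynomial

lemma eval_divByMonic_X_sub_C_of_isRoot {p : R[X]} {a : R} (ha : p.IsRoot a) :
    (p /ₘ (X - C a)).eval a = (derivative p).eval a := by
  conv_rhs => rw [← mul_divByMonic_eq_iff_isRoot.2 ha]
  simp

lemma linearMap_apply_eq_sum_range (L : R[X] →ₗ[R] R) {q : R[X]} {k : ℕ}
    (hq : q.natDegree ≤ k) : L q = ∑ n ∈ Finset.range (k + 1), q.coeff n * L (X ^ n) := by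
  conv_lhs => rw [as_sum_range_C_mul_X_pow' q (Nat.lt_succ_of_le hq), map_sum]
  simp only [← smul_eq_C_mul, map_smul, smul_eq_mul]

end MomentFunctional

section PolynomialFamily

open Filter Topology

variable {𝕜 : Type*} [NontriviallyNormedField 𝕜] {p : 𝕜 → 𝕜[X]} {D : 𝕜[X]} {t : 𝕜} {k : ℕ}

/-- `D` is the derivative at `t` of the one-parameter family `p` of polynomials, taken coefficient
by coefficient since `𝕜[X]` carries no norm. -/
def HasCoeffDerivAt (p : 𝕜 → 𝕜[X]) (D : 𝕜[X]) (t : 𝕜) : Prop :=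
  ∀ n : ℕ, HasDerivAt (fun s => (p s).coeff n) (D.coeff n) t

lemma hasDerivAt_coeff_of_natDegree_le (hk : ∀ᶠ s in 𝓝 t, (p s).natDegree ≤ k) {n : ℕ}
    (hn : k < n) : HasDerivAt (fun s => (p s).coeff n) 0 t := by
  refine (hasDerivAt_const t 0).congr_of_eventuallyEq ?_
  filter_upwards [hk] with s hs using coeff_eq_zero_of_natDegree_lt (hs.trans_lt hn)

lemma exists_hasCoeffDerivAt (hk : ∀ᶠ s in 𝓝 t, (p s).natDegree ≤ k)
    (hp : ∀ n : ℕ, DifferentiableAt 𝕜 (fun s => (p s).coeff n) t) :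
    ∃ D : 𝕜[X], HasCoeffDerivAt p D t := by
  let c : ℕ → 𝕜 := fun n => deriv (fun s => (p s).coeff n) t
  refine ⟨∑ i ∈ Finset.range (k + 1), C (c i) * X ^ i, fun n => ?_⟩
  simp only [finsetSum_coeff, coeff_C_mul_X_pow, Finset.sum_ite_eq, Finset.mem_range]
  split_ifs with hn
  · exact (hp n).hasDerivAt
  · exact hasDerivAt_coeff_of_natDegree_le hk (by omega)

namespace HasCoeffDerivAt

lemma natDegree_le (hp : HasCoeffDerivAt p D t) (hk : ∀ᶠ s in 𝓝 t, (p s).natDegree ≤ k) :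
    D.natDegree ≤ k :=
  natDegree_le_iff_coeff_eq_zero.2 fun n hn =>
    (hp n).unique (hasDerivAt_coeff_of_natDegree_le hk hn)

lemma hasDerivAt_apply (hp : HasCoeffDerivAt p D t)
    (hk : ∀ᶠ s in 𝓝 t, (p s).natDegree ≤ k) {L : 𝕜 → 𝕜[X] →ₗ[𝕜] 𝕜} {L' : 𝕜[X] →ₗ[𝕜] 𝕜}
    (hL : ∀ q : 𝕜[X], HasDerivAt (fun s => L s q) (L' q) t) :
    HasDerivAt (fun s => L s (p s)) (L t D + L' (p t)) t := by
  have hsum : HasDerivAt (fun s => ∑ n ∈ Finset.range (k + 1), (p s).coeff n * L s (X ^ n))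
      (∑ n ∈ Finset.range (k + 1), (D.coeff n * L t (X ^ n) + (p t).coeff n * L' (X ^ n))) t :=
    .fun_sum fun n _ => (hp n).mul (hL (X ^ n))
  rw [Finset.sum_add_distrib, ← linearMap_apply_eq_sum_range _ (hp.natDegree_le hk),
    ← linearMap_apply_eq_sum_range _ hk.self_of_nhds] at hsum
  refine hsum.congr_of_eventuallyEq ?_
  filter_upwards [hk] with s hs using linearMap_apply_eq_sum_range _ hs

lemma eval_add_deriv_mul_eval_derivative_eq_zero (hp : HasCoeffDerivAt p D t)
    (hk : ∀ᶠ s in 𝓝 t, (p s).natDegree ≤ k) {x : 𝕜 → 𝕜}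
    (hx : DifferentiableAt 𝕜 x t) (hroot : ∀ᶠ s in 𝓝 t, (p s).IsRoot (x s)) :
    D.eval (x t) + deriv x t * (derivative (p t)).eval (x t) = 0 := by
  have hL (q : 𝕜[X]) : HasDerivAt (fun s => leval (x s) q)
      ((deriv x t • (leval (x t) ∘ₗ derivative)) q) t := by
    simpa [mul_comm] using! (q.hasDerivAt (x t)).comp t hx.hasDerivAt
  exact (hp.hasDerivAt_apply hk hL).unique ((hasDerivAt_const t 0).congr_of_eventuallyEq hroot)

lemma map_mul_eq_map_X_mul (hp : HasCoeffDerivAt p D t)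
    {L : 𝕜 → 𝕜[X] →ₗ[𝕜] 𝕜} (hL : ∀ q : 𝕜[X], HasDerivAt (fun s => L s q) (-L t (X * q)) t)
    (hortho : ∀ᶠ s in 𝓝 t, IsOrthogonalPolynomial (L s) k (p s)) {q : 𝕜[X]} (hq : q.degree < k) :
    L t (D * q) = L t (X * (p t * q)) := by
  have hk : ∀ᶠ s in 𝓝 t, (p s).natDegree ≤ k :=
    hortho.mono fun s hs => natDegree_le_of_degree_le hs.degree_eq.le
  have hzero : (fun s => (L s ∘ₗ LinearMap.mulRight 𝕜 q) (p s)) =ᶠ[𝓝 t] fun _ => 0 := by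
    filter_upwards [hortho] with s hs
    simpa [mul_comm] using hs.map_mul_eq_zero q hq
  have hder : HasDerivAt (fun s => (L s ∘ₗ LinearMap.mulRight 𝕜 q) (p s))
      (L t (D * q) + -L t (X * (p t * q))) t :=
    hp.hasDerivAt_apply hk (L := fun s => L s ∘ₗ LinearMap.mulRight 𝕜 q)
      (L' := -(L t ∘ₗ LinearMap.mulLeft 𝕜 X ∘ₗ LinearMap.mulRight 𝕜 q)) fun f => hL (f * q)
  exact add_neg_eq_zero.1 (hder.unique ((hasDerivAt_const t 0).congr_of_eventuallyEq hzero))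

end HasCoeffDerivAt

theorem deriv_root_neg_of_hasDerivAt_momentFunctional {L : ℝ → ℝ[X] →ₗ[ℝ] ℝ} {t : ℝ}
    (hL : ∀ q : ℝ[X], HasDerivAt (fun s => L s q) (-L t (X * q)) t)
    (hpos : IsPosDefFunctional (L t)) {p : ℝ → ℝ[X]}
    (hortho : ∀ᶠ s in 𝓝 t, IsOrthogonalPolynomial (L s) k (p s))
    (hp : ∀ n : ℕ, DifferentiableAt ℝ (fun s => (p s).coeff n) t) {x : ℝ → ℝ}
    (hx : DifferentiableAt ℝ x t) (hroot : ∀ᶠ s in 𝓝 t, (p s).IsRoot (x s)) :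
    deriv x t < 0 := by
  have hk : ∀ᶠ s in 𝓝 t, (p s).natDegree ≤ k :=
    hortho.mono fun s hs => natDegree_le_of_degree_le hs.degree_eq.le
  obtain ⟨D, hpD⟩ := exists_hasCoeffDerivAt hk hp
  have hpt : IsOrthogonalPolynomial (L t) k (p t) := hortho.self_of_nhds
  have ha : (p t).IsRoot (x t) := hroot.self_of_nhds
  set Q := p t /ₘ (X - C (x t))
  have hQdeg : Q.degree < k := degree_divByMonic_X_sub_C_lt hpt.degree_eq.le _
  have hp0 : p t ≠ 0 := degree_ne_bot.1 (by simp [hpt.degree_eq])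
  have hQ0 : Q ≠ 0 := right_ne_zero_of_mul (mul_divByMonic_eq_iff_isRoot.2 ha ▸ hp0)
  have hDQ : 0 < D.eval (x t) * L t Q := by
    rw [← hpt.map_mul_divByMonic ha (degree_le_of_natDegree_le (hpD.natDegree_le hk)),
      hpD.map_mul_eq_map_X_mul hL hortho hQdeg, hpt.map_X_mul_mul_divByMonic ha]
    exact hpos _ hp0
  have hQQ : 0 < (derivative (p t)).eval (x t) * L t Q := by
    rw [← eval_divByMonic_X_sub_C_of_isRoot ha, ← hpt.map_mul_divByMonic ha hQdeg.le]
    exact hpos _ hQ0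
  have hsum := hpD.eval_add_deriv_mul_eval_derivative_eq_zero hk hx hroot
  have hprod : deriv x t * ((derivative (p t)).eval (x t) * L t Q) < 0 := by
    linear_combination hDQ + L t Q * hsum
  exact neg_of_mul_neg_left hprod hQQ.le

end PolynomialFamily

section ExponentialFamily

open Filter Topology ProbabilityTheory

variable {μ : Measure ℝ} {t : ℝ}

/-- The moment functional `q ↦ ∫ q(y) e^{ty} dμ(y)` of the exponential tilt of `μ`. It is built
from the moments, which makes it linear without integrability assumptions. -/
noncomputable def tiltedMomentFunctional (μ : Measure ℝ) (t : ℝ) : ℝ[X] →ₗ[ℝ] ℝ :=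
  lsum fun n => LinearMap.mulRight ℝ (∫ y, y ^ n * Real.exp (t * y) ∂μ)

lemma tiltedMomentFunctional_apply_eq_sum (μ : Measure ℝ) (t : ℝ) (q : ℝ[X]) :
    tiltedMomentFunctional μ t q =
      ∑ n ∈ Finset.range (q.natDegree + 1), q.coeff n * ∫ y, y ^ n * Real.exp (t * y) ∂μ :=
  sum_over_range _ fun n => by simp

lemma tiltedMomentFunctional_X_mul (μ : Measure ℝ) (t : ℝ) (q : ℝ[X]) :
    tiltedMomentFunctional μ t (X * q) = ∑ n ∈ Finset.range (q.natDegree + 1),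
      q.coeff n * ∫ y, y ^ (n + 1) * Real.exp (t * y) ∂μ := by
  conv_lhs => rw [as_sum_range_C_mul_X_pow q, Finset.mul_sum, map_sum]
  refine Finset.sum_congr rfl fun n _ => ?_
  rw [X_mul, mul_assoc, ← pow_succ, C_mul_X_pow_eq_monomial]
  simp [tiltedMomentFunctional]

lemma hasDerivAt_tiltedMomentFunctional (ht : t ∈ interior (integrableExpSet id μ)) (q : ℝ[X]) :
    HasDerivAt (fun s => tiltedMomentFunctional μ s q) (tiltedMomentFunctional μ t (X * q)) t := by
  rw [tiltedMomentFunctional_X_mul]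
  simp only [tiltedMomentFunctional_apply_eq_sum]
  exact .fun_sum fun n _ => (hasDerivAt_integral_pow_mul_exp_real ht n).const_mul _

lemma integrable_eval_mul_exp (ht : t ∈ interior (integrableExpSet id μ)) (q : ℝ[X]) :
    Integrable (fun y => q.eval y * Real.exp (t * y)) μ := by
  simp only [eval_eq_sum_range, Finset.sum_mul, mul_assoc]
  exact integrable_finsetSum _ fun n _ =>
    (integrable_pow_mul_exp_of_mem_interior_integrableExpSet ht n).const_mul _

lemma tiltedMomentFunctional_eq_integral (ht : t ∈ interior (integrableExpSet id μ)) (q : ℝ[X]) :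
    tiltedMomentFunctional μ t q = ∫ y, q.eval y * Real.exp (t * y) ∂μ := by
  have hint (n : ℕ) : Integrable (fun y => q.coeff n * (y ^ n * Real.exp (t * y))) μ :=
    (integrable_pow_mul_exp_of_mem_interior_integrableExpSet ht n).const_mul _
  simp only [tiltedMomentFunctional_apply_eq_sum, eval_eq_sum_range, Finset.sum_mul, mul_assoc]
  rw [integral_finsetSum _ fun n _ => hint n]
  simp only [integral_const_mul]

lemma isPosDefFunctional_tiltedMomentFunctional (hμ : μ.support.Infinite)
    (ht : t ∈ interior (integrableExpSet id μ)) :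
    IsPosDefFunctional (tiltedMomentFunctional μ t) := by
  intro q hq
  have hnonneg : 0 ≤ fun y => (q * q).eval y * Real.exp (t * y) := fun y => by
    simpa using mul_nonneg (mul_self_nonneg (q.eval y)) (Real.exp_nonneg _)
  rw [tiltedMomentFunctional_eq_integral ht,
    integral_pos_iff_support_of_nonneg hnonneg (integrable_eval_mul_exp ht _), pos_iff_ne_zero]
  intro hzero
  have hroots : q.rootSet ℝ ∈ ae μ := by
    rw [mem_ae_iff]
    refine measure_mono_null (fun y hy => ?_) hzero
    simpa [mem_rootSet, hq] using hy
  have hfin : (q.rootSet ℝ).Finite := q.rootSet_finite ℝ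
  exact hμ (hfin.subset (Measure.support_subset_of_isClosed hfin.isClosed hroots))

theorem stmt15_general (hμ : μ.support.Infinite) {k : ℕ} {ζ : ℝ}
    (hζ : -ζ ∈ interior (integrableExpSet id μ)) {p : ℝ → ℝ[X]}
    (hortho : ∀ᶠ η in 𝓝 ζ, IsOrthogonalPolynomial (tiltedMomentFunctional μ (-η)) k (p η))
    (hp : ∀ n : ℕ, DifferentiableAt ℝ (fun η => (p η).coeff n) ζ) {x : ℝ → ℝ}
    (hx : DifferentiableAt ℝ x ζ) (hroot : ∀ᶠ η in 𝓝 ζ, (p η).IsRoot (x η)) :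
    deriv x ζ < 0 := by
  refine deriv_root_neg_of_hasDerivAt_momentFunctional
    (L := fun η => tiltedMomentFunctional μ (-η)) (fun q => ?_)
    (isPosDefFunctional_tiltedMomentFunctional hμ hζ) hortho hp hx hroot
  simpa using! (hasDerivAt_tiltedMomentFunctional hζ q).comp ζ (hasDerivAt_neg ζ)

end ExponentialFamily

section SqSubOneMeasure

open ProbabilityTheory

/-- The measure `(y² - 1)^a dy` on `(1, ∞)`, whose exponential tilt at `-ζ` is, up to a
constant factor, the measure with density `wgt l ζ` when `a = l + 1/2`. -/
noncomputable def sqSubOneMeasure (a : ℝ) : Measure ℝ :=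
  (volume.restrict (Set.Ioi 1)).withDensity fun y => ENNReal.ofReal ((y ^ 2 - 1) ^ a)

lemma sq_sub_one_rpow_pos (a : ℝ) {y : ℝ} (hy : 1 < y) : 0 < (y ^ 2 - 1) ^ a :=
  Real.rpow_pos_of_pos (by nlinarith) a

lemma infinite_support_sqSubOneMeasure (a : ℝ) : (sqSubOneMeasure a).support.Infinite := by
  have hac : volume.restrict (Set.Ioi 1) ≪ sqSubOneMeasure a := by
    refine withDensity_absolutelyContinuous' (by fun_prop) ?_
    filter_upwards [ae_restrict_mem measurableSet_Ioi] with y hy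
    simpa using sq_sub_one_rpow_pos a hy
  refine (Set.Ioi_infinite (1 : ℝ)).mono (subset_trans ?_ hac.support_mono)
  simpa [Measure.support_eq_univ] using
    Measure.interior_inter_support (μ := (volume : Measure ℝ)) (s := Set.Ioi 1)

lemma integral_sqSubOneMeasure (a : ℝ) (f : ℝ → ℝ) :
    ∫ y, f y ∂sqSubOneMeasure a = ∫ y in Set.Ioi 1, (y ^ 2 - 1) ^ a * f y := by
  rw [sqSubOneMeasure, integral_withDensity_eq_integral_toReal_smul (by fun_prop) (by simp)]
  refine setIntegral_congr_fun measurableSet_Ioi fun y hy => ?_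
  simp only [ENNReal.toReal_ofReal (sq_sub_one_rpow_pos a hy).le, smul_eq_mul]

lemma integrableOn_sq_sub_one_rpow_mul_exp {a t : ℝ} (ha : 0 ≤ a) (ht : t < 0) :
    IntegrableOn (fun y : ℝ => (y ^ 2 - 1) ^ a * Real.exp (t * y)) (Set.Ioi 1) := by
  have hbound : IntegrableOn (fun y : ℝ => y ^ (2 * a) * Real.exp (t * y)) (Set.Ioi 1) := by
    have h := integrableOn_rpow_mul_exp_neg_mul_rpow (s := 2 * a) (by linarith) one_pos
      (neg_pos.2 ht)
    simp only [neg_neg, Real.rpow_one] at h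
    exact h.mono_set (Set.Ioi_subset_Ioi zero_le_one)
  refine hbound.mono' (by fun_prop) ?_
  filter_upwards [ae_restrict_mem measurableSet_Ioi] with y (hy : 1 < y)
  have hpos := sq_sub_one_rpow_pos a hy
  rw [Real.norm_of_nonneg (by positivity), Real.rpow_mul (by linarith), Real.rpow_two]
  gcongr
  · nlinarith
  · linarith

lemma mem_interior_integrableExpSet_sqSubOneMeasure {a t : ℝ} (ha : 0 ≤ a) (ht : t < 0) :
    t ∈ interior (integrableExpSet id (sqSubOneMeasure a)) := by
  refine interior_maximal (fun s hs => ?_) isOpen_Iio ht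
  refine (integrable_withDensity_iff_integrable_smul' (by fun_prop) (by simp)).2 ?_
  refine (integrableOn_sq_sub_one_rpow_mul_exp ha hs).congr_fun (fun y hy => ?_) measurableSet_Ioi
  simp only [ENNReal.toReal_ofReal (sq_sub_one_rpow_pos a hy).le, smul_eq_mul, id]

end SqSubOneMeasure

section Weight

variable {l : ℕ} {ζ : ℝ}

lemma integral_mul_wgt (hζ : 0 < ζ) (q : ℝ[X]) :
    ∫ y in Set.Ioi 1, q.eval y * wgt l ζ y = ζ / ((2 * l + 1) * K2 ζ) *
      tiltedMomentFunctional (sqSubOneMeasure (l + 1 / 2)) (-ζ) q := by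
  rw [tiltedMomentFunctional_eq_integral
    (mem_interior_integrableExpSet_sqSubOneMeasure (by positivity) (neg_neg_of_pos hζ)),
    integral_sqSubOneMeasure, ← integral_const_mul]
  congr 1 with y
  simp only [wgt]
  ring

lemma IsOrthoFam.isOrthogonalPolynomial {P : ℕ → ℝ[X]} (hP : IsOrthoFam l ζ P) (hζ : 0 < ζ)
    (k : ℕ) :
    IsOrthogonalPolynomial (tiltedMomentFunctional (sqSubOneMeasure (l + 1 / 2)) (-ζ)) k (P k) := by
  obtain ⟨hdeg, -, hint⟩ := hP
  simp only [← eval_mul, integral_mul_wgt hζ] at hint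
  have hconst : ζ / ((2 * l + 1) * K2 ζ) ≠ 0 :=
    left_ne_zero_of_mul (ne_of_eq_of_ne (hint 0 0) (by simp))
  refine .of_sequence _ ⟨P, hdeg⟩ fun i hi => ?_
  simpa [hi.ne, hconst] using hint i k

end Weight

theorem stmt15 (l k : ℕ) (hk : 1 ≤ k)
    (I : Set ℝ) (hIopen : IsOpen I) (hIsub : I ⊆ Set.Ioi (0 : ℝ))
    (P : ℝ → ℕ → Polynomial ℝ)
    (hP : ∀ ζ ∈ I, IsOrthoFam l ζ (P ζ))
    (hdiff : ∀ j n : ℕ, DifferentiableOn ℝ (fun ζ => (P ζ j).coeff n) I)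
    (x : ℝ → ℝ) (hx : DifferentiableOn ℝ x I)
    (hxgt : ∀ ζ ∈ I, 1 < x ζ)
    (hzero : ∀ ζ ∈ I, (P ζ k).eval (x ζ) = 0) :
    ∀ ζ ∈ I, deriv x ζ < 0 := by
  intro ζ hζ
  have hI : I ∈ nhds ζ := hIopen.mem_nhds hζ
  refine stmt15_general (k := k) (infinite_support_sqSubOneMeasure (l + 1 / 2))
    (mem_interior_integrableExpSet_sqSubOneMeasure (by positivity) (neg_neg_of_pos (hIsub hζ)))
    ?_ (fun n => (hdiff k n).differentiableAt hI) (hx.differentiableAt hI)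
    (Filter.mem_of_superset hI hzero)
  filter_upwards [hI] with η hη using (hP η hη).isOrthogonalPolynomial (hIsub hη) k
end
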